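/- (Brezis–Browder ordering principle) Let S be a nonempty set, ≼ a preorder (reflexive and transitive relation) on S, and N : S → ℝ ∪ {+∞} an increasing function (a ≼ b implies N(a) ≤ N(b)). Suppose that every increasing sequence in S (a sequence (a_n) with a_n ≼ a_{n+1} for all n) is bounded from above with respect to ≼. Then for each a₀ ∈ S there exists an N-maximal element a* ∈ S with a₀ ≼ a*, where a* is called N-maximal if for every a ∈ S with a* ≼ a one has N(a*) = N(a). -/

import Mathlib

/-- Brezis–Browder ordering principle: if `≼` is a preorder on a nonempty
set `S`, `N : S → ℝ ∪ {+∞}` is increasing, and every increasing sequence in `S` is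
bounded from above, then for each `a₀ ∈ S` there is an `N`-maximal element `a*` with
`a₀ ≼ a*`. -/
theorem brezis_browder {S : Type*} [Nonempty S] (r : S → S → Prop)
    (hrefl : ∀ a, r a a) (htrans : ∀ a b c, r a b → r b c → r a c)
    (N : S → WithTop ℝ) (hN : ∀ a b, r a b → N a ≤ N b)
    (hbdd : ∀ a : ℕ → S, (∀ n, r (a n) (a (n + 1))) → ∃ b, ∀ n, r (a n) b)
    (a₀ : S) :
    ∃ astar : S, r a₀ astar ∧ ∀ a : S, r astar a → N astar = N a := by
  classical
  obtain ⟨f, hf⟩ := exists_surjective_nat ℚ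
  -- one step: climb above level `f n` whenever this is possible
  have step : ∀ (n : ℕ) (x : S), ∃ y, r x y ∧
      ∀ c, r x c → (((f n : ℚ) : ℝ) : WithTop ℝ) < N c →
        (((f n : ℚ) : ℝ) : WithTop ℝ) < N y := by
    intro n x
    by_cases h : ∃ c, r x c ∧ (((f n : ℚ) : ℝ) : WithTop ℝ) < N c
    · obtain ⟨c, hc, hlt⟩ := h
      exact ⟨c, hc, fun _ _ _ => hlt⟩
    · exact ⟨x, hrefl x, fun c hc hlt => absurd ⟨c, hc, hlt⟩ h⟩
  choose g hg1 hg2 using step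
  let a : ℕ → S := fun n => Nat.rec a₀ (fun n x => g n x) n
  have ha : ∀ n, a (n + 1) = g n (a n) := fun _ => rfl
  obtain ⟨b, hb⟩ := hbdd a (fun n => by rw [ha]; exact hg1 n (a n))
  refine ⟨b, hb 0, fun c hbc => ?_⟩
  by_contra hne
  have hlt : N b < N c := lt_of_le_of_ne (hN b c hbc) hne
  have hq : ∃ q : ℚ, N b < ((q : ℝ) : WithTop ℝ) ∧ ((q : ℝ) : WithTop ℝ) < N c := by
    generalize N b = u at hlt
    generalize N c = v at hlt
    induction u using WithTop.recTopCoe with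
    | top => exact absurd hlt not_top_lt
    | coe x =>
      induction v using WithTop.recTopCoe with
      | top =>
        obtain ⟨q, hq⟩ := exists_rat_gt x
        exact ⟨q, WithTop.coe_lt_coe.2 hq, WithTop.coe_lt_top _⟩
      | coe y =>
        obtain ⟨q, h1, h2⟩ := exists_rat_btwn (WithTop.coe_lt_coe.1 hlt)
        exact ⟨q, WithTop.coe_lt_coe.2 h1, WithTop.coe_lt_coe.2 h2⟩
  obtain ⟨q, h1, h2⟩ := hq
  obtain ⟨n, rfl⟩ := hf q
  have h3 := hg2 n (a n) c (htrans _ _ _ (hb n) hbc) h2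
  rw [← ha] at h3
  exact absurd (h3.trans_le (hN _ _ (hb (n + 1)))) (not_lt_of_gt h1)
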